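/- Let F be a finite field of characteristic p > 5 with |F| = q ≡ −1 or 11 (mod 30), and G = C_3 × D_10. Then FG ≅ F² ⊕ F₂² ⊕ M₂(F)² ⊕ M₂(F₂)² as F-algebras, where F₂ is the quadratic extension of F; consequently U(FG) ≅ C_{q−1}² × C_{q²−1}² × GL(2,F)² × GL(2,F₂)². -/

import Mathlib

/-!
Reading `F[C₃ × D_{2n}]` as `F[C₃][D_{2n}]`, the decomposition `F[C₃] ≃ F × K` (a primitive cube
root of unity generates `K` when `q ≡ 2 mod 3`) reduces everything to `L[D_{2n}]` for `L = F, K`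
and odd `n`.

Let `ζ` be a primitive `n`-th root of unity over `L`. If `n` divides `q - 1` or `q + 1`, where
`q = |L|`, Frobenius fixes or swaps `ζᵏ` and `ζ⁻ᵏ`, so the traces `ζᵏ + ζ⁻ᵏ` lie in `L` and the
plane representations of the dihedral group are defined over `L`. An element killed by these and
by the two one-dimensional representations gives two polynomials of degree `< n`, one from its
rotations and one from its reflections, which vanish at all `n` powers of `ζ`; hence the sum of
the representations is injective, and a count of dimensions makes it an isomorphism.
-/

open Polynomial IntermediateField

section CoefficientProduct

variable (R A B M : Type*) [CommSemiring R] [Semiring A] [Semiring B] [Algebra R A] [Algebra R B]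
  [Monoid M]

/-- The canonical isomorphism `(A × B)[M] ≃ A[M] × B[M]`. -/
noncomputable def monoidAlgebraProdAlgEquiv :
    MonoidAlgebra (A × B) M ≃ₐ[R] MonoidAlgebra A M × MonoidAlgebra B M :=
  .ofBijective ((MonoidAlgebra.mapAlgHom M (AlgHom.fst R A B)).prod
      (MonoidAlgebra.mapAlgHom M (AlgHom.snd R A B)))
    ⟨fun f g hfg ↦ by
      obtain ⟨hfst, hsnd⟩ := Prod.ext_iff.1 hfg
      ext m
      · simpa using congr(($hfst).coeff m)
      · simpa using congr(($hsnd).coeff m),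
    fun x ↦ ⟨.ofCoeff (x.1.coeff.zipWith Prod.mk rfl x.2.coeff), by ext <;> simp⟩⟩

variable {R A B M} in
/-- If `R[M] ≃ A × B`, then `R[M × N] ≃ (A × B)[N] ≃ A[N] × B[N]`. -/
noncomputable def monoidAlgebraProdAlgEquivOfAlgEquiv {N : Type*} [Monoid N]
    (e : MonoidAlgebra R M ≃ₐ[R] A × B) :
    MonoidAlgebra R (M × N) ≃ₐ[R] MonoidAlgebra A N × MonoidAlgebra B N :=
  (MonoidAlgebra.domCongr R R MulEquiv.prodComm).trans <|
    (MonoidAlgebra.curryAlgEquiv R).trans <|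
    (MonoidAlgebra.mapAlgEquiv R N e).trans (monoidAlgebraProdAlgEquiv R A B N)

end CoefficientProduct

theorem nonempty_monoidAlgebra_algEquiv_of_injective {F G A : Type*} [Field F] [Monoid G] [Finite G]
    [Ring A] [Algebra F A] {Φ : MonoidAlgebra F G →ₐ[F] A} (hΦ : Function.Injective Φ)
    (h_finrank : Module.finrank F A = Nat.card G) : Nonempty (MonoidAlgebra F G ≃ₐ[F] A) := by
  have := Module.Finite.of_basis (MonoidAlgebra.basis G F)
  have : Module.Finite F A := Module.finite_of_finrank_pos (h_finrank ▸ Nat.card_pos)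
  have h_eq : Module.finrank F (MonoidAlgebra F G) = Module.finrank F A := by
    rw [h_finrank, Module.finrank_eq_nat_card_basis (MonoidAlgebra.basis G F)]
  exact ⟨.ofBijective Φ
    ⟨hΦ, (Φ.toLinearMap.injective_iff_surjective_of_finrank_eq_finrank h_eq).1 hΦ⟩⟩

section ZModPolynomial

variable {n : ℕ} [NeZero n] {R : Type*} [CommSemiring R]

/-- The polynomial `∑ aᵢ Xⁱ` of degree `< n`, the exponents being the representatives
`0, …, n - 1` of `ZMod n`. It turns a character sum `∑ aᵢ zⁱ` into the value at `z`. -/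
noncomputable def zmodPolynomial (a : ZMod n → R) : R[X] :=
  ∑ i, monomial i.val (a i)

theorem degree_zmodPolynomial_lt (a : ZMod n → R) : (zmodPolynomial a).degree < n :=
  (degree_sum_le _ _).trans_lt <| (Finset.sup_lt_iff (WithBot.bot_lt_coe n)).2 fun i _ ↦
    (degree_monomial_le _ _).trans_lt (Nat.cast_lt.2 i.val_lt)

theorem coeff_zmodPolynomial (a : ZMod n → R) (i : ZMod n) :
    (zmodPolynomial a).coeff i.val = a i := by
  simp [zmodPolynomial, coeff_monomial, (ZMod.val_injective n).eq_iff]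

theorem eq_zero_of_zmodPolynomial_eq_zero {a : ZMod n → R} (ha : zmodPolynomial a = 0)
    (i : ZMod n) : a i = 0 := by
  rw [← coeff_zmodPolynomial a i, ha, coeff_zero]

theorem aeval_zmodPolynomial {A : Type*} [Semiring A] [Algebra R A] (a : ZMod n → R) (x : A) :
    aeval x (zmodPolynomial a) = ∑ i, a i • x ^ i.val := by
  simp [zmodPolynomial, aeval_monomial, Algebra.smul_def]

theorem pow_val_add {M : Type*} [Monoid M] {x : M} (hx : x ^ n = 1) (i j : ZMod n) :
    x ^ (i + j).val = x ^ i.val * x ^ j.val := by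
  rw [ZMod.val_add, ← pow_eq_pow_mod _ hx, pow_add]

end ZModPolynomial

section Cyclic

variable {n : ℕ} [NeZero n]

theorem lift_zmodChar {R A : Type*} [CommSemiring R] [CommSemiring A] [Algebra R A]
    {x : A} (hx : x ^ n = 1) (f : MonoidAlgebra R (Multiplicative (ZMod n))) :
    MonoidAlgebra.lift R A _ (AddChar.zmodChar n hx).toMonoidHom f =
      aeval x (zmodPolynomial fun i ↦ f.coeff (.ofAdd i)) := by
  rw [MonoidAlgebra.lift_apply, Finsupp.sum_fintype _ _ (by simp), aeval_zmodPolynomial]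
  exact (Multiplicative.ofAdd.sum_comp _).symm

variable {F K : Type*} [Field F] [Field K] [Algebra F K]

theorem eq_zero_of_aeval_one_of_aeval_eq_zero {ζ : K} (hint : IsIntegral F ζ) (hζ : ζ ≠ 1)
    {f : F[X]} (hdeg : f.degree < (minpoly F ζ).natDegree + 1) (h_one : aeval (1 : F) f = 0)
    (h_root : aeval ζ f = 0) : f = 0 := by
  have h_coprime : IsCoprime (X - C 1) (minpoly F ζ) := by
    refine (irreducible_X_sub_C 1).coprime_iff_not_dvd.2 fun h ↦ hζ ?_
    have h_eq := eq_of_monic_of_associated (monic_X_sub_C 1) (minpoly.monic hint)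
      ((irreducible_X_sub_C 1).associated_of_dvd (minpoly.irreducible hint) h)
    simpa [← h_eq, sub_eq_zero] using minpoly.aeval F ζ
  have h_dvd : (X - C 1) * minpoly F ζ ∣ f :=
    h_coprime.mul_dvd (dvd_iff_isRoot.2 (by simpa using h_one)) (minpoly.dvd F ζ h_root)
  refine eq_zero_of_dvd_of_degree_lt h_dvd ?_
  rwa [degree_mul, degree_X_sub_C, degree_eq_natDegree (minpoly.ne_zero hint), add_comm]

theorem nonempty_monoidAlgebra_zmod_algEquiv [FiniteDimensional F K] {ζ : K} (hζn : ζ ^ n = 1)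
    (hζ : ζ ≠ 1) (htop : F⟮ζ⟯ = ⊤) (hn : Module.finrank F K + 1 = n) :
    Nonempty (MonoidAlgebra F (Multiplicative (ZMod n)) ≃ₐ[F] F × K) := by
  have hdeg := (Field.primitive_element_iff_minpoly_natDegree_eq F ζ).1 htop
  let Φ := (MonoidAlgebra.lift F F _ (AddChar.zmodChar n (one_pow n)).toMonoidHom).prod
    (MonoidAlgebra.lift F K _ (AddChar.zmodChar n hζn).toMonoidHom)
  refine nonempty_monoidAlgebra_algEquiv_of_injective (Φ := Φ)
    ((injective_iff_map_eq_zero Φ).2 fun f hf ↦ ?_) ?_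
  · obtain ⟨h_one, h_root⟩ := Prod.ext_iff.1 hf
    have h_lt : (zmodPolynomial fun i ↦ f.coeff (.ofAdd i)).degree <
        (minpoly F ζ).natDegree + 1 :=
      (degree_zmodPolynomial_lt _).trans_eq (by rw [hdeg]; exact_mod_cast hn.symm)
    have h_poly := eq_zero_of_aeval_one_of_aeval_eq_zero (.of_finite F ζ) hζ h_lt
      ((lift_zmodChar _ f).symm.trans h_one) ((lift_zmodChar hζn f).symm.trans h_root)
    ext i
    exact eq_zero_of_zmodPolynomial_eq_zero h_poly i.toAdd
  · simp [Module.finrank_prod, ← hn, add_comm]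

end Cyclic

section DihedralLift

open DihedralGroup

variable {n : ℕ} [NeZero n]

theorem pow_mul_mul_pow_of_mul_mul_eq {M : Type*} [Monoid M] {x y : M} (hxy : x * y * x = y)
    (k : ℕ) : x ^ k * y * x ^ k = y := by
  induction k with
  | zero => simp
  | succ k ih =>
    calc x ^ (k + 1) * y * x ^ (k + 1) = x ^ k * (x * y * x) * x ^ k := by
          simp only [pow_succ x k, ← pow_succ' x k, mul_assoc]
      _ = y := by rw [hxy, ih]

theorem pow_val_mul_mul_pow_val {M : Type*} [Monoid M] {x y : M} (hx : x ^ n = 1)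
    (hxy : x * y * x = y) (i j : ZMod n) :
    x ^ i.val * (y * x ^ j.val) = y * x ^ (j - i).val :=
  calc x ^ i.val * (y * x ^ j.val) = x ^ i.val * y * x ^ i.val * x ^ (j - i).val := by
        rw [mul_assoc _ _ (x ^ (j - i).val), ← pow_val_add hx, add_sub_cancel, mul_assoc]
    _ = y * x ^ (j - i).val := by rw [pow_mul_mul_pow_of_mul_mul_eq hxy]

/-- The universal property of the presentation `⟨x, y | xⁿ = y² = 1, xyx = y⟩` of the dihedral
group: the homomorphism sending `r 1` to `x` and `sr 0` to `y`. -/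
def dihedralLift {M : Type*} [Monoid M] (x y : M) (hx : x ^ n = 1) (hy : y * y = 1)
    (hxy : x * y * x = y) : DihedralGroup n →* M where
  toFun
    | r i => x ^ i.val
    | sr i => y * x ^ i.val
  map_one' := by
    change x ^ (0 : ZMod n).val = 1
    simp
  map_mul' := by
    rintro (i | i) (j | j)
    · exact pow_val_add hx i j
    · exact (pow_val_mul_mul_pow_val hx hxy i j).symm
    · change y * x ^ (i + j).val = y * x ^ i.val * x ^ j.val
      rw [pow_val_add hx, mul_assoc]
    · change x ^ (j - i).val = y * x ^ i.val * (y * x ^ j.val)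
      rw [mul_assoc, pow_val_mul_mul_pow_val hx hxy, ← mul_assoc, hy, one_mul]

variable {R : Type*} [CommSemiring R]

/-- The polynomial `∑ f(rⁱ) Xⁱ` recording the coefficients at the rotations. -/
noncomputable def rotationPolynomial (f : MonoidAlgebra R (DihedralGroup n)) : R[X] :=
  zmodPolynomial fun i ↦ f.coeff (r i)

/-- The polynomial `∑ f(srⁱ) Xⁱ` recording the coefficients at the reflections. -/
noncomputable def reflectionPolynomial (f : MonoidAlgebra R (DihedralGroup n)) : R[X] :=
  zmodPolynomial fun i ↦ f.coeff (sr i)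

theorem eq_zero_of_rotationPolynomial_eq_zero_of_reflectionPolynomial_eq_zero
    {f : MonoidAlgebra R (DihedralGroup n)} (hr : rotationPolynomial f = 0)
    (hsr : reflectionPolynomial f = 0) : f = 0 := by
  ext (i | i)
  · exact eq_zero_of_zmodPolynomial_eq_zero hr i
  · exact eq_zero_of_zmodPolynomial_eq_zero hsr i

theorem lift_dihedralLift {A : Type*} [Semiring A] [Algebra R A] {x y : A} (hx : x ^ n = 1)
    (hy : y * y = 1) (hxy : x * y * x = y) (f : MonoidAlgebra R (DihedralGroup n)) :
    MonoidAlgebra.lift R A _ (dihedralLift x y hx hy hxy) f =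
      aeval x (rotationPolynomial f) + y * aeval x (reflectionPolynomial f) := by
  rw [MonoidAlgebra.lift_apply, Finsupp.sum_fintype _ _ (by simp),
    ← DihedralGroup.equivSum.symm.sum_comp, Fintype.sum_sum_type, rotationPolynomial,
    reflectionPolynomial, aeval_zmodPolynomial, aeval_zmodPolynomial, Finset.mul_sum]
  simp only [mul_smul_comm]
  rfl

end DihedralLift

section PlaneRepresentation

open Matrix

/-- The companion matrix of `X² - tX + 1`. It stands for the rotation with trace `t`, and its
eigenvalues are `z, z⁻¹` when `t = z + z⁻¹`. -/
def rotationMatrix {R : Type*} [CommRing R] (t : R) : Matrix (Fin 2) (Fin 2) R :=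
  !![0, -1; 1, t]

/-- The coordinate swap, an involution inverting every `rotationMatrix t` under conjugation. -/
def reflectionMatrix (R : Type*) [CommRing R] : Matrix (Fin 2) (Fin 2) R :=
  !![0, 1; 1, 0]

section CommRing

variable {R S : Type*} [CommRing R] [CommRing S]

theorem reflectionMatrix_mul_self : reflectionMatrix R * reflectionMatrix R = 1 := by
  simp [reflectionMatrix, one_fin_two]

theorem rotationMatrix_mul_reflectionMatrix_mul_rotationMatrix (t : R) :
    rotationMatrix t * reflectionMatrix R * rotationMatrix t = reflectionMatrix R := by
  simp [rotationMatrix, reflectionMatrix]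

theorem map_rotationMatrix (φ : R →+* S) (t : R) :
    φ.mapMatrix (rotationMatrix t) = rotationMatrix (φ t) := by
  simp [rotationMatrix, ← Matrix.ext_iff, Fin.forall_fin_two]

theorem map_reflectionMatrix (φ : R →+* S) :
    φ.mapMatrix (reflectionMatrix R) = reflectionMatrix S := by
  simp [reflectionMatrix, ← Matrix.ext_iff, Fin.forall_fin_two]

theorem rotationMatrix_mulVec {z z' : R} (hz : z * z' = 1) :
    rotationMatrix (z + z') *ᵥ ![1, -z] = z • ![1, -z] := by
  ext i
  fin_cases i
  · simp [rotationMatrix]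
  · suffices 1 + -(z * (z + z')) = -(z * z) by simpa [rotationMatrix] using this
    linear_combination -hz

theorem reflectionMatrix_mulVec (z : R) : reflectionMatrix R *ᵥ ![1, -z] = ![-z, 1] := by
  ext i
  fin_cases i <;> simp [reflectionMatrix]

theorem aeval_mulVec_of_mulVec_eq_smul {ι : Type*} [Fintype ι] [DecidableEq ι] [Algebra R S]
    {M : Matrix ι ι S} {v : ι → S} {z : S} (h : M *ᵥ v = z • v) (p : R[X]) :
    aeval M p *ᵥ v = aeval z p • v := by
  induction p using Polynomial.induction_on' with
  | add p q hp hq => simp [add_mulVec, add_smul, hp, hq]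
  | monomial k a =>
    have h_pow : M ^ k *ᵥ v = z ^ k • v := by
      induction k with
      | zero => simp
      | succ k ih => rw [pow_succ, ← mulVec_mulVec, h, mulVec_smul, ih, smul_smul, pow_succ']
    simp [aeval_monomial, ← Algebra.smul_def, smul_mulVec, h_pow]

theorem eq_of_mulVec_one_neg_eq [IsDomain R] {A B : Matrix (Fin 2) (Fin 2) R} {z z' : R}
    (hz : z ≠ z') (h : A *ᵥ ![1, -z] = B *ᵥ ![1, -z])
    (h' : A *ᵥ ![1, -z'] = B *ᵥ ![1, -z']) : A = B := by
  have h_entries (i : Fin 2) : A i 0 = B i 0 ∧ A i 1 = B i 1 := by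
    have hi := congrFun h i
    have hi' := congrFun h' i
    simp only [mulVec, dotProduct, Fin.sum_univ_two, cons_val_zero, cons_val_one] at hi hi'
    have h_one : A i 1 = B i 1 := by
      refine mul_right_cancel₀ (sub_ne_zero.2 hz) ?_
      linear_combination hi' - hi
    exact ⟨by linear_combination hi + z * h_one, h_one⟩
  ext i j
  fin_cases j
  · exact (h_entries i).1
  · exact (h_entries i).2

end CommRing

variable {L E : Type*} [Field L] [Field E] [Algebra L E] {n : ℕ} {t : L} {z z' : E}

theorem rotationMatrix_pow_eq_one (ht : algebraMap L E t = z + z') (hzz' : z * z' = 1)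
    (hz : z ≠ z') (hzn : z ^ n = 1) : rotationMatrix t ^ n = 1 := by
  have hz'n : z' ^ n = 1 := by simpa [mul_pow, hzn] using congr($hzz' ^ n)
  have h_eigen {w w' : E} (hw : w * w' = 1) (hwn : w ^ n = 1) :
      rotationMatrix (w + w') ^ n *ᵥ ![1, -w] = (1 : Matrix _ _ E) *ᵥ ![1, -w] := by
    simpa [hwn] using
      aeval_mulVec_of_mulVec_eq_smul (rotationMatrix_mulVec hw) (X ^ n : E[X])
  refine Matrix.map_injective (algebraMap L E).injective ?_
  have h_map : (algebraMap L E).mapMatrix (rotationMatrix t ^ n) =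
      (algebraMap L E).mapMatrix 1 := by
    rw [map_pow, map_rotationMatrix, ht, map_one]
    exact eq_of_mulVec_one_neg_eq hz (h_eigen hzz' hzn)
      (add_comm z z' ▸ h_eigen ((mul_comm _ _).trans hzz') hz'n)
  exact h_map

variable [NeZero n]

/-- The two-dimensional representation of the dihedral group in which the rotation `r 1` has
trace `t`. -/
noncomputable def planeRepresentation (ht : rotationMatrix t ^ n = 1) :
    MonoidAlgebra L (DihedralGroup n) →ₐ[L] Matrix (Fin 2) (Fin 2) L :=
  MonoidAlgebra.lift L _ _ <| dihedralLift (rotationMatrix t) (reflectionMatrix L) ht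
    reflectionMatrix_mul_self (rotationMatrix_mul_reflectionMatrix_mul_rotationMatrix t)

theorem aeval_eq_zero_of_planeRepresentation_eq_zero (hn : rotationMatrix t ^ n = 1)
    (ht : algebraMap L E t = z + z') (hzz' : z * z' = 1) (hz : z ≠ z')
    {f : MonoidAlgebra L (DihedralGroup n)} (hf : planeRepresentation hn f = 0) :
    aeval z (rotationPolynomial f) = 0 ∧ aeval z (reflectionPolynomial f) = 0 := by
  set a := aeval z (rotationPolynomial f)
  set b := aeval z (reflectionPolynomial f)
  have h_map : aeval (rotationMatrix (z + z')) (rotationPolynomial f) +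
      reflectionMatrix E * aeval (rotationMatrix (z + z')) (reflectionPolynomial f) = 0 := by
    have h_rot : (Algebra.ofId L E).mapMatrix (rotationMatrix t) = rotationMatrix (z + z') :=
      ht ▸ map_rotationMatrix (algebraMap L E) t
    have h_refl : (Algebra.ofId L E).mapMatrix (reflectionMatrix L) = reflectionMatrix E :=
      map_reflectionMatrix (algebraMap L E)
    rw [← h_rot, ← h_refl, aeval_algHom_apply, aeval_algHom_apply, ← map_mul, ← map_add,
      ← map_zero (Algebra.ofId L E).mapMatrix, ← hf, planeRepresentation, lift_dihedralLift]
  have h_vec : a • ![1, -z] + b • ![-z, 1] = (0 : Fin 2 → E) := by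
    have := congr($h_map *ᵥ ![1, -z])
    rw [add_mulVec, ← mulVec_mulVec, aeval_mulVec_of_mulVec_eq_smul (rotationMatrix_mulVec hzz'),
      aeval_mulVec_of_mulVec_eq_smul (rotationMatrix_mulVec hzz'), mulVec_smul,
      reflectionMatrix_mulVec, zero_mulVec] at this
    exact this
  have h_fst : a + b * -z = 0 := by simpa using congrFun h_vec 0
  have h_snd : a * -z + b = 0 := by simpa using congrFun h_vec 1
  have h_ne : z * z ≠ 1 := fun h ↦ hz (mul_left_cancel₀ (left_ne_zero_of_mul_eq_one hzz')
    (h.trans hzz'.symm))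
  have h_b : b = 0 := by
    refine (mul_eq_zero.1 ?_).resolve_right (sub_ne_zero.2 h_ne)
    linear_combination -z * h_fst - h_snd
  exact ⟨by linear_combination h_fst + z * h_b, h_b⟩

end PlaneRepresentation

section DihedralDecomposition

variable {L E : Type*} [Field L] [Field E] [Algebra L E]

/-- The one-dimensional representation of the dihedral group that is trivial on the rotations
and sends the reflections to the sign `ε`. -/
noncomputable def signRepresentation (n : ℕ) [NeZero n] (L : Type*) [Field L] (ε : ℤˣ) :
    MonoidAlgebra L (DihedralGroup n) →ₐ[L] L :=
  MonoidAlgebra.lift L L _ <| dihedralLift 1 ((ε : ℤ) : L) (one_pow n)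
    (by rw [← Int.cast_mul, ← Units.val_mul, Int.units_mul_self]; simp) (by simp)

theorem aeval_one_eq_zero_of_signRepresentation_eq_zero {n : ℕ} [NeZero n] (h2 : (2 : L) ≠ 0)
    {f : MonoidAlgebra L (DihedralGroup n)}
    (h_pos : signRepresentation n L 1 f = 0) (h_neg : signRepresentation n L (-1) f = 0) :
    aeval (1 : E) (rotationPolynomial f) = 0 ∧ aeval (1 : E) (reflectionPolynomial f) = 0 := by
  rw [signRepresentation, lift_dihedralLift] at h_pos h_neg
  set a := aeval (1 : L) (rotationPolynomial f) with ha
  set b := aeval (1 : L) (reflectionPolynomial f) with hb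
  have h_map (p : L[X]) : aeval (1 : E) p = algebraMap L E (aeval 1 p) := by
    rw [← aeval_algebraMap_apply, map_one]
  push_cast at h_pos h_neg
  have h_a : a = 0 := (mul_eq_zero.1 (by linear_combination h_pos + h_neg)).resolve_left h2
  have h_b : b = 0 := (mul_eq_zero.1 (by linear_combination h_pos - h_neg)).resolve_left h2
  exact ⟨by rw [h_map, ← ha, h_a, map_zero], by rw [h_map, ← hb, h_b, map_zero]⟩

theorem eq_zero_of_degree_lt_of_aeval_pow_eq_zero {n : ℕ} {ζ : E} (hζ : IsPrimitiveRoot ζ n)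
    {p : L[X]} (h_deg : p.degree < n) (h : ∀ k < n, aeval (ζ ^ k) p = 0) : p = 0 := by
  refine (Polynomial.map_eq_zero (algebraMap L E)).1 <|
    eq_zero_of_degree_lt_of_eval_index_eq_zero (s := Finset.range n) (v := fun k ↦ ζ ^ k) ?_ ?_ ?_
  · exact fun i hi j hj ↦ hζ.pow_inj (Finset.mem_range.1 hi) (Finset.mem_range.1 hj)
  · simpa using h_deg
  · exact fun k hk ↦ by rw [eval_map_algebraMap, h k (Finset.mem_range.1 hk)]

theorem forall_pow_of_pow_odd_eq_one {G : Type*} [DivisionMonoid G] {ζ : G} {m : ℕ}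
    (hζ : ζ ^ (2 * m + 1) = 1) {P : G → Prop}
    (h_one : P 1) (h_pos : ∀ k : Fin m, P (ζ ^ (k + 1 : ℕ)))
    (h_neg : ∀ k : Fin m, P (ζ ^ (k + 1 : ℕ))⁻¹) {k : ℕ} (hk : k < 2 * m + 1) : P (ζ ^ k) := by
  obtain rfl | hk0 := Nat.eq_zero_or_pos k
  · simpa using h_one
  obtain hkm | hkm := le_or_gt k m
  · simpa [Nat.sub_add_cancel hk0] using h_pos ⟨k - 1, by omega⟩
  · have h_inv : (ζ ^ (2 * m - k + 1))⁻¹ = ζ ^ k :=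
      inv_eq_of_mul_eq_one_right (by rw [← pow_add, ← hζ]; congr 1; omega)
    exact h_inv ▸ h_neg ⟨2 * m - k, by omega⟩

theorem pow_succ_ne_inv_pow_succ {ζ : E} {m : ℕ} (hζ : IsPrimitiveRoot ζ (2 * m + 1)) (k : Fin m) :
    ζ ^ (k + 1 : ℕ) ≠ (ζ ^ (k + 1 : ℕ))⁻¹ := by
  intro h
  have h_ne : ζ ^ (k + 1 : ℕ) ≠ 0 := pow_ne_zero _ (hζ.ne_zero (by omega))
  have h_one : ζ ^ (k + 1 + (k + 1) : ℕ) = 1 := by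
    rw [pow_add]; nth_rw 2 [h]; exact mul_inv_cancel₀ h_ne
  exact hζ.pow_ne_one_of_pos_of_lt (by omega) (by omega) h_one

theorem nonempty_monoidAlgebra_dihedralGroup_algEquiv {m : ℕ} (h2 : (2 : L) ≠ 0) {ζ : E}
    (hζ : IsPrimitiveRoot ζ (2 * m + 1)) {t : Fin m → L}
    (ht : ∀ k, algebraMap L E (t k) = ζ ^ (k + 1 : ℕ) + (ζ ^ (k + 1 : ℕ))⁻¹) :
    Nonempty (MonoidAlgebra L (DihedralGroup (2 * m + 1)) ≃ₐ[L]
      (Fin 2 → L) × (Fin m → Matrix (Fin 2) (Fin 2) L)) := by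
  have h_mul_inv (k : Fin m) : ζ ^ (k + 1 : ℕ) * (ζ ^ (k + 1 : ℕ))⁻¹ = 1 :=
    mul_inv_cancel₀ (pow_ne_zero _ (hζ.ne_zero (by omega)))
  have h_rot (k : Fin m) : rotationMatrix (t k) ^ (2 * m + 1) = 1 :=
    rotationMatrix_pow_eq_one (ht k) (h_mul_inv k) (pow_succ_ne_inv_pow_succ hζ k)
      (by rw [pow_right_comm, hζ.pow_eq_one, one_pow])
  let Φ := (AlgHom.pi fun i : Fin 2 ↦ signRepresentation (2 * m + 1) L (![1, -1] i)).prod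
    (AlgHom.pi fun k ↦ planeRepresentation (h_rot k))
  refine nonempty_monoidAlgebra_algEquiv_of_injective (Φ := Φ)
    ((injective_iff_map_eq_zero Φ).2 fun f hf ↦ ?_) ?_
  · obtain ⟨h_sign, h_plane⟩ := Prod.ext_iff.1 hf
    let P (z : E) := aeval z (rotationPolynomial f) = 0 ∧ aeval z (reflectionPolynomial f) = 0
    have h_one : P 1 := aeval_one_eq_zero_of_signRepresentation_eq_zero h2
      (congrFun h_sign 0) (congrFun h_sign 1)
    have h_pos (k : Fin m) : P (ζ ^ (k + 1 : ℕ)) :=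
      aeval_eq_zero_of_planeRepresentation_eq_zero (h_rot k) (ht k) (h_mul_inv k)
        (pow_succ_ne_inv_pow_succ hζ k) (congrFun h_plane k)
    have h_neg (k : Fin m) : P (ζ ^ (k + 1 : ℕ))⁻¹ :=
      aeval_eq_zero_of_planeRepresentation_eq_zero (h_rot k) ((ht k).trans (add_comm _ _))
        ((mul_comm _ _).trans (h_mul_inv k)) (pow_succ_ne_inv_pow_succ hζ k).symm
        (congrFun h_plane k)
    have h_roots {k : ℕ} (hk : k < 2 * m + 1) : P (ζ ^ k) :=
      forall_pow_of_pow_odd_eq_one hζ.pow_eq_one h_one h_pos h_neg hk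
    exact eq_zero_of_rotationPolynomial_eq_zero_of_reflectionPolynomial_eq_zero
      (eq_zero_of_degree_lt_of_aeval_pow_eq_zero hζ (degree_zmodPolynomial_lt _)
        fun k hk ↦ (h_roots hk).1)
      (eq_zero_of_degree_lt_of_aeval_pow_eq_zero hζ (degree_zmodPolynomial_lt _)
        fun k hk ↦ (h_roots hk).2)
  · rw [DihedralGroup.nat_card]
    suffices 2 + m * 4 = 2 * (2 * m + 1) by
      simpa [Module.finrank_prod, Module.finrank_pi_fintype, Module.finrank_matrix] using this
    ring

end DihedralDecomposition

section FiniteField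

theorem mem_range_algebraMap_of_pow_card_eq {L E : Type*} [Field L] [Finite L] [Field E]
    [Algebra L E] {x : E} (hx : x ^ Nat.card L = x) : x ∈ (algebraMap L E).range := by
  refine (splits_X_pow_nat_card_sub_X (K := L)).mem_range_of_isRoot
    (FiniteField.X_pow_card_sub_X_ne_zero L Finite.one_lt_card) ?_
  simpa [sub_eq_zero] using hx

theorem add_inv_mem_range_algebraMap {L E : Type*} [Field L] [Finite L] [Field E] [Algebra L E]
    {n : ℕ} (hn : n ∣ Nat.card L - 1 ∨ n ∣ Nat.card L + 1) {ζ : E} (hζ : ζ ^ n = 1) :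
    ζ + ζ⁻¹ ∈ (algebraMap L E).range := by
  have := Fintype.ofFinite L
  refine mem_range_algebraMap_of_pow_card_eq ?_
  have h_frob : (ζ + ζ⁻¹) ^ Nat.card L = ζ ^ Nat.card L + (ζ ^ Nat.card L)⁻¹ := by
    rw [← inv_pow, Nat.card_eq_fintype_card]
    exact map_add (FiniteField.frobeniusAlgHom L E) ζ ζ⁻¹
  rw [h_frob]
  obtain ⟨k, hk⟩ | ⟨k, hk⟩ := hn
  · have h_pow : ζ ^ Nat.card L = ζ := by
      rw [← Nat.sub_add_cancel (Nat.card_pos (α := L)), hk, pow_succ, pow_mul, hζ, one_pow, one_mul]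
    rw [h_pow]
  · have h_pow : ζ ^ Nat.card L = ζ⁻¹ :=
      eq_inv_of_mul_eq_one_left (by rw [← pow_succ, hk, pow_mul, hζ, one_pow])
    rw [h_pow, inv_inv, add_comm]

theorem natCast_ne_zero_of_dvd_card_sub_one_or_dvd_card_add_one {L : Type*} [Field L] [Finite L]
    {n : ℕ} (hn : n ∣ Nat.card L - 1 ∨ n ∣ Nat.card L + 1) : (n : L) ≠ 0 := by
  intro h
  have := Fintype.ofFinite L
  have h_card : (Nat.card L : L) = 0 := by
    rw [Nat.card_eq_fintype_card, FiniteField.cast_card_eq_zero]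
  obtain ⟨k, hk⟩ | ⟨k, hk⟩ := hn
  · have h_cast := congr(($hk : L))
    rw [Nat.cast_sub Nat.card_pos, Nat.cast_mul, h, h_card] at h_cast
    simp at h_cast
  · have h_cast := congr(($hk : L))
    rw [Nat.cast_add, Nat.cast_mul, h, h_card] at h_cast
    simp at h_cast

theorem nonempty_monoidAlgebra_dihedralGroup_algEquiv_of_finite (L : Type*) [Field L] [Finite L]
    {m : ℕ} (h_odd : Odd (Nat.card L))
    (hm : 2 * m + 1 ∣ Nat.card L - 1 ∨ 2 * m + 1 ∣ Nat.card L + 1) :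
    Nonempty (MonoidAlgebra L (DihedralGroup (2 * m + 1)) ≃ₐ[L]
      (Fin 2 → L) × (Fin m → Matrix (Fin 2) (Fin 2) L)) := by
  have h2 : ((2 : ℕ) : L) ≠ 0 :=
    natCast_ne_zero_of_dvd_card_sub_one_or_dvd_card_add_one
      (.inl (h_odd.tsub_odd odd_one).two_dvd)
  have : NeZero ((2 * m + 1 : ℕ) : L) :=
    ⟨natCast_ne_zero_of_dvd_card_sub_one_or_dvd_card_add_one hm⟩
  obtain ⟨ζ, hζ⟩ :=
    HasEnoughRootsOfUnity.exists_primitiveRoot (AlgebraicClosure L) (2 * m + 1)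
  have h_traces (k : Fin m) : ∃ t : L,
      algebraMap L (AlgebraicClosure L) t = ζ ^ (k + 1 : ℕ) + (ζ ^ (k + 1 : ℕ))⁻¹ :=
    add_inv_mem_range_algebraMap hm (by rw [pow_right_comm, hζ.pow_eq_one, one_pow])
  choose t ht using h_traces
  exact nonempty_monoidAlgebra_dihedralGroup_algEquiv (by exact_mod_cast h2) hζ ht

theorem exists_pow_eq_one_notMem_range_algebraMap {F K : Type*} [Field F] [Finite F] [Field K]
    [Finite K] [Algebra F K] {l : ℕ} (hl : l.Prime) (hlF : ¬l ∣ Nat.card F - 1)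
    (hlK : l ∣ Nat.card K - 1) :
    ∃ ζ : K, ζ ^ l = 1 ∧ ζ ∉ (algebraMap F K).range := by
  have := Fact.mk hl
  have := Fintype.ofFinite F
  obtain ⟨u, hu⟩ := exists_prime_orderOf_dvd_card' (G := Kˣ) l (by rwa [Nat.card_units])
  have hul : (u : K) ^ l = 1 := by rw [← Units.val_pow_eq_pow_val, ← hu, pow_orderOf_eq_one]; rfl
  refine ⟨u, hul, ?_⟩
  rintro ⟨x, hx⟩
  have hx0 : x ≠ 0 := by
    rintro rfl
    exact u.ne_zero (hx ▸ map_zero _)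
  have h_pow : (u : K) ^ (Nat.card F - 1) = 1 := by
    rw [← hx, ← map_pow, Nat.card_eq_fintype_card, FiniteField.pow_card_sub_one_eq_one x hx0,
      map_one]
  exact hlF (hu ▸ orderOf_dvd_of_pow_eq_one (Units.ext (by simpa using h_pow)))

theorem adjoin_simple_eq_top_of_finrank_prime {F K : Type*} [Field F] [Field K] [Algebra F K]
    (hK : (Module.finrank F K).Prime) {x : K} (hx : x ∉ (algebraMap F K).range) : F⟮x⟯ = ⊤ := by
  have := IntermediateField.isSimpleOrder_of_finrank_prime F K hK
  exact (eq_bot_or_eq_top F⟮x⟯).resolve_left fun h ↦ hx (mem_bot.1 (adjoin_simple_eq_bot_iff.1 h))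

theorem dvd_natCard_sub_one_of_finrank_eq_two {F K : Type*} [Field F] [Field K] [Finite K]
    [Algebra F K] (hK : Module.finrank F K = 2) {d : ℕ}
    (hd : d ∣ Nat.card F - 1 ∨ d ∣ Nat.card F + 1) : d ∣ Nat.card K - 1 := by
  rw [Module.natCard_eq_pow_finrank (K := F) (V := K), hK, ← one_pow 2, Nat.sq_sub_sq]
  exact hd.elim (·.mul_left _) (·.mul_right _)

theorem nonempty_monoidAlgebra_zmod_three_algEquiv {F K : Type*} [Field F] [Finite F] [Field K]
    [Finite K] [Algebra F K] (hK : Module.finrank F K = 2) (h3 : Nat.card F % 3 = 2) :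
    Nonempty (MonoidAlgebra F (Multiplicative (ZMod 3)) ≃ₐ[F] F × K) := by
  obtain ⟨ζ, hζ, hζF⟩ :=
    exists_pow_eq_one_notMem_range_algebraMap (F := F) Nat.prime_three (by omega)
      (dvd_natCard_sub_one_of_finrank_eq_two hK (.inr (by omega)))
  exact nonempty_monoidAlgebra_zmod_algEquiv hζ (fun h ↦ hζF (h ▸ one_mem _))
    (adjoin_simple_eq_top_of_finrank_prime (hK ▸ Nat.prime_two) hζF) (by rw [hK])

theorem nonempty_units_mulEquiv_multiplicative_zmod (L : Type*) [Field L] [Finite L] :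
    Nonempty (Lˣ ≃* Multiplicative (ZMod (Nat.card L - 1))) :=
  ⟨mulEquivOfCyclicCardEq <| by
    rw [Nat.card_units, Nat.card_congr Multiplicative.toAdd, Nat.card_zmod]⟩

end FiniteField

/-- The isomorphism `(A × B) × (C × D) ≃ A × C × B × D` permuting the factors of a product of
algebras. -/
def prodProdInterleaveAlgEquiv (R A B C D : Type*) [CommSemiring R] [Semiring A]
    [Semiring B] [Semiring C] [Semiring D] [Algebra R A] [Algebra R B] [Algebra R C] [Algebra R D] :
    ((A × B) × (C × D)) ≃ₐ[R] A × C × B × D where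
  toFun x := (x.1.1, x.2.1, x.1.2, x.2.2)
  invFun x := ((x.1, x.2.2.1), (x.2.1, x.2.2.2))
  left_inv _ := rfl
  right_inv _ := rfl
  map_mul' _ _ := rfl
  map_add' _ _ := rfl
  commutes' _ := rfl

theorem nonempty_monoidAlgebra_zmod_three_prod_dihedralGroup_algEquiv (F K : Type*) [Field F]
    [Finite F] [Field K] [Finite K] [Algebra F K]
    (hK : Module.finrank F K = 2) (h_odd : Odd (Nat.card F)) (h3 : Nat.card F % 3 = 2) {m : ℕ}
    (hm : 2 * m + 1 ∣ Nat.card F - 1 ∨ 2 * m + 1 ∣ Nat.card F + 1) :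
    Nonempty (MonoidAlgebra F (Multiplicative (ZMod 3) × DihedralGroup (2 * m + 1)) ≃ₐ[F]
      ((Fin 2 → F) × (Fin 2 → K) × (Fin m → Matrix (Fin 2) (Fin 2) F)
        × (Fin m → Matrix (Fin 2) (Fin 2) K))) := by
  have h_card : Nat.card K = Nat.card F ^ 2 := hK ▸ Module.natCard_eq_pow_finrank
  obtain ⟨e⟩ := nonempty_monoidAlgebra_zmod_three_algEquiv hK h3
  obtain ⟨eF⟩ := nonempty_monoidAlgebra_dihedralGroup_algEquiv_of_finite F h_odd hm
  obtain ⟨eK⟩ := nonempty_monoidAlgebra_dihedralGroup_algEquiv_of_finite K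
    (h_card ▸ h_odd.pow) (.inl (dvd_natCard_sub_one_of_finrank_eq_two hK hm))
  exact ⟨(monoidAlgebraProdAlgEquivOfAlgEquiv e).trans <|
    (AlgEquiv.prodCongr eF (eK.restrictScalars F)).trans <|
    prodProdInterleaveAlgEquiv F _ _ _ _⟩

theorem stmt_17_general (F K : Type*) [Field F] [Finite F] [Field K] [Algebra F K]
    (hK : Module.finrank F K = 2) (h_odd : Odd (Nat.card F)) (h3 : Nat.card F % 3 = 2) {m : ℕ}
    (hm : 2 * m + 1 ∣ Nat.card F - 1 ∨ 2 * m + 1 ∣ Nat.card F + 1) :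
    let G := Multiplicative (ZMod 3) × DihedralGroup (2 * m + 1)
    let q := Nat.card F
    Nonempty (MonoidAlgebra F G ≃ₐ[F]
      ((Fin 2 → F) × (Fin 2 → K) × (Fin m → Matrix (Fin 2) (Fin 2) F)
        × (Fin m → Matrix (Fin 2) (Fin 2) K))) ∧
    Nonempty ((MonoidAlgebra F G)ˣ ≃*
      ((Fin 2 → Multiplicative (ZMod (q - 1))) × (Fin 2 → Multiplicative (ZMod (q ^ 2 - 1)))
        × (Fin m → GL (Fin 2) F) × (Fin m → GL (Fin 2) K))) := by
  intro G q
  have : FiniteDimensional F K := Module.finite_of_finrank_pos (by omega)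
  have : Finite K := Module.finite_of_finite F
  have h_card : Nat.card K = q ^ 2 := hK ▸ Module.natCard_eq_pow_finrank
  obtain ⟨e⟩ := nonempty_monoidAlgebra_zmod_three_prod_dihedralGroup_algEquiv F K hK h_odd h3 hm
  obtain ⟨uF⟩ := nonempty_units_mulEquiv_multiplicative_zmod F
  obtain ⟨uK⟩ := nonempty_units_mulEquiv_multiplicative_zmod K
  rw [h_card] at uK
  exact ⟨⟨e⟩, ⟨(Units.mapEquiv e.toMulEquiv).trans <| MulEquiv.prodUnits.trans <|
    (MulEquiv.piUnits.trans <| .piCongrRight fun _ ↦ uF).prodCongr <| MulEquiv.prodUnits.trans <|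
    (MulEquiv.piUnits.trans <| .piCongrRight fun _ ↦ uK).prodCongr <| MulEquiv.prodUnits.trans <|
    MulEquiv.piUnits.prodCongr MulEquiv.piUnits⟩⟩

/-- For `F` a finite field of characteristic `p > 5` with `q ≡ 29, 11 (mod 30)`,
`F₂` the quadratic extension of `F`, and `G = C₃ × D₁₀`:
`FG ≅ F² ⊕ F₂² ⊕ M₂(F)² ⊕ M₂(F₂)²` as `F`-algebras, and consequently
`U(FG) ≅ C_{q-1}² × C_{q²-1}² × GL(2,F)² × GL(2,F₂)²`. -/
theorem stmt_17 (F : Type) [Field F] [Fintype F] (p : ℕ) (hchar : CharP F p) (hp : 5 < p)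
    (hq : Fintype.card F % 30 = 29 ∨ Fintype.card F % 30 = 11)
    (K : Type) [Field K] [Algebra F K] (hK : Module.finrank F K = 2) :
    let G := Multiplicative (ZMod 3) × DihedralGroup 5
    let q := Fintype.card F
    Nonempty (MonoidAlgebra F G ≃ₐ[F]
      ((Fin 2 → F) × (Fin 2 → K) × (Fin 2 → Matrix (Fin 2) (Fin 2) F)
        × (Fin 2 → Matrix (Fin 2) (Fin 2) K))) ∧
    Nonempty ((MonoidAlgebra F G)ˣ ≃*
      ((Fin 2 → Multiplicative (ZMod (q - 1))) × (Fin 2 → Multiplicative (ZMod (q ^ 2 - 1)))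
        × (Fin 2 → GL (Fin 2) F) × (Fin 2 → GL (Fin 2) K))) := by
  rw [← Nat.card_eq_fintype_card] at hq ⊢
  exact stmt_17_general F K hK (m := 2) (Nat.odd_iff.2 (by omega)) (by omega) (by omega)
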